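/- Let n ≥ 2, 1 ≤ s ≤ n, let a₁,…,a_{s−1} be nonzero real numbers and b ∈ ℝ, and let L ⊆ ℝⁿ be the hyperplane parameterized by f(x₁,…,x_{n−1}) = (x₁,…,x_{n−1}, a₁x₁+⋯+a_{s−1}x_{s−1}+b). Then ω×(L) = inf{ω×(y) : y ∈ L}. -/

import Mathlib

open Filter MeasureTheory Metric Set BigOperators

/-- Π×(q) = ∏_{i : qᵢ ≠ 0} |qᵢ| (empty product = 1). -/
noncomputable def prodTimes {n : ℕ} (q : Fin n → ℤ) : ℝ :=
  ∏ i, if q i = 0 then 1 else |(q i : ℝ)|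

/-- Multiplicative Diophantine exponent ω×(y): the sup (in the extended reals) of all
v ∈ ℝ such that there are infinitely many q ∈ ℤⁿ with |q·y + p| < Π×(q)^{-v/n}
for some p ∈ ℤ. -/
noncomputable def omegaT {n : ℕ} (y : Fin n → ℝ) : EReal :=
  sSup {w : EReal | ∃ v : ℝ, w = (v : EReal) ∧
    {q : Fin n → ℤ | ∃ p : ℤ, |(∑ i, (q i : ℝ) * y i) + (p : ℝ)| <
      (prodTimes q) ^ (-(v / (n : ℝ)))}.Infinite}

/-- ω×(μ) for a measure: sup{v : μ{y : ω×(y) > v} > 0}. -/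
noncomputable def omegaTMeas {n : ℕ} (μ : Measure (Fin n → ℝ)) : EReal :=
  sSup {w : EReal | ∃ v : ℝ, w = (v : EReal) ∧ 0 < μ {y | (v : EReal) < omegaT y}}

/-!
Dirichlet's theorem gives `ω×(y) ≥ n` at every point of the hyperplane, so only exponents `v > n`
matter. For such a `v`, the integer vectors `q` away from the normal direction of the hyperplane
contribute slabs of summable measure, and by Borel–Cantelli almost every point lies in finitely many
of them. For `q` near the normal direction, the form `q · y + p` restricted to the hyperplane has as
coefficients the signed distances from the entries of `z • β` to the nearest integers, where `β`
lists the coefficients of the hyperplane and `z` is the last coordinate of `q`. If `β` has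
infinitely many simultaneous approximations of exponent `t`, these forms are small at *every* point,
which bounds `ω×` from below on the whole hyperplane; if it has finitely many, a pigeonhole count of
the small distances makes the measures of these slabs summable too. Both alternatives have the same
threshold for `t`, so any `v` exceeded by `ω×` on a set of positive measure is a lower bound for
`ω×` everywhere.
-/

theorem exists_ne_forall_abs_sub_lt_one_div {κ ι : Type*} [Fintype ι] {S : Finset κ} {K : ℕ}
    (hK : 0 < K) {u : κ → ι → ℝ} (hu : ∀ k ∈ S, ∀ i, u k i ∈ Ico (0 : ℝ) 1)
    (hS : K ^ Fintype.card ι < S.card) :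
    ∃ k ∈ S, ∃ l ∈ S, k ≠ l ∧ ∀ i, |u k i - u l i| < 1 / K := by
  classical
  have hK0 : (0 : ℝ) < K := Nat.cast_pos.2 hK
  let boxes : Finset (ι → ℤ) := Fintype.piFinset fun _ => Finset.Ico 0 (K : ℤ)
  have hcard : boxes.card < S.card := by simpa [boxes] using hS
  have hmaps : ∀ k ∈ S, (fun i => ⌊K * u k i⌋) ∈ boxes := by
    intro k hk
    refine Fintype.mem_piFinset.2 fun i => Finset.mem_Ico.2 ⟨?_, ?_⟩
    · exact Int.floor_nonneg.2 (mul_nonneg hK0.le (hu k hk i).1)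
    · exact Int.floor_lt.2 (by simpa using mul_lt_of_lt_one_right hK0 (hu k hk i).2)
  obtain ⟨k, hk, l, hl, hkl, hfloor⟩ :=
    Finset.exists_ne_map_eq_of_card_lt_of_maps_to hcard hmaps
  refine ⟨k, hk, l, hl, hkl, fun i => ?_⟩
  have hlt := Int.abs_sub_lt_one_of_floor_eq_floor (congrFun hfloor i)
  rwa [← mul_sub, abs_mul, abs_of_pos hK0, ← lt_div_iff₀' hK0] at hlt

theorem exists_pos_forall_le_of_finite {α : Type*} {S : Set α} (hS : S.Finite) {f : α → ℝ}
    (hf : ∀ x ∈ S, 0 < f x) : ∃ c > 0, ∀ x ∈ S, c ≤ f x := by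
  rcases S.eq_empty_or_nonempty with rfl | hne
  · exact ⟨1, one_pos, by simp⟩
  · obtain ⟨x, hx, hmin⟩ := Set.exists_min_image S f hS hne
    exact ⟨f x, hf x hx, hmin⟩

theorem round_eq_neg_of_abs_add_lt {x : ℝ} {k : ℤ} (h : |x + k| < 1 / 2) : round x = -k := by
  rw [round_eq_iff, mem_Ico, Int.cast_neg]
  constructor <;> linarith [abs_lt.1 h]

section LatticeResidue

variable {ι : Type*} [Fintype ι]

/-- The displacement of `y` from the integer lattice, coordinatewise in `[-1/2, 1/2]`; its sup norm
is the distance from `y` to the lattice. -/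
noncomputable def latticeResidue (y : ι → ℝ) : ι → ℝ := fun i => y i - round (y i)

theorem norm_latticeResidue_le_half (y : ι → ℝ) : ‖latticeResidue y‖ ≤ 1 / 2 :=
  (pi_norm_le_iff_of_nonneg (by norm_num)).2 fun i => abs_sub_round (y i)

theorem norm_latticeResidue_le_norm_sub (y : ι → ℝ) (k : ι → ℤ) :
    ‖latticeResidue y‖ ≤ ‖fun i => y i - k i‖ :=
  (pi_norm_le_iff_of_nonneg (norm_nonneg _)).2 fun i =>
    (round_le (y i) (k i)).trans (norm_le_pi_norm (fun i => y i - (k i : ℝ)) i)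

theorem norm_latticeResidue_sub_le (y z : ι → ℝ) :
    ‖latticeResidue (y - z)‖ ≤ ‖latticeResidue y - latticeResidue z‖ := by
  refine (norm_latticeResidue_le_norm_sub _ fun i => round (y i) - round (z i)).trans_eq ?_
  congr 1
  ext i
  simp only [latticeResidue, Pi.sub_apply, Int.cast_sub]
  ring

theorem norm_latticeResidue_natCast_smul_le (k : ℕ) (y : ι → ℝ) :
    ‖latticeResidue ((k : ℝ) • y)‖ ≤ k * ‖latticeResidue y‖ := by
  calc ‖latticeResidue ((k : ℝ) • y)‖
      ≤ ‖fun i => ((k : ℝ) • y) i - ((k * round (y i) : ℤ) : ℝ)‖ :=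
        norm_latticeResidue_le_norm_sub _ fun i => k * round (y i)
    _ = ‖(k : ℝ) • latticeResidue y‖ := by
        congr 1
        ext i
        simp only [latticeResidue, Pi.smul_apply, smul_eq_mul, Int.cast_mul, Int.cast_natCast]
        ring
    _ = k * ‖latticeResidue y‖ := by rw [norm_smul, Real.norm_natCast]

theorem norm_latticeResidue_neg (y : ι → ℝ) : ‖latticeResidue (-y)‖ = ‖latticeResidue y‖ := by
  have hle : ∀ z : ι → ℝ, ‖latticeResidue (-z)‖ ≤ ‖latticeResidue z‖ := fun z => by
    have hzero : latticeResidue (0 : ι → ℝ) = 0 := by ext; simp [latticeResidue]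
    simpa [hzero] using norm_latticeResidue_sub_le 0 z
  exact (hle y).antisymm (by simpa using hle (-y))

end LatticeResidue

section SimultaneousApproximation

variable {ι : Type*} [Fintype ι] {β : ι → ℝ} {t : ℝ}

/-- The positive integers `N` that approximate `β` simultaneously with exponent `t`: every
coordinate of `N • β` is within `N ^ (-t)` of an integer. -/
def simApprox (β : ι → ℝ) (t : ℝ) : Set ℕ :=
  {N | 0 < N ∧ ‖latticeResidue ((N : ℝ) • β)‖ < (N : ℝ) ^ (-t)}

theorem norm_latticeResidue_pos_of_simApprox_finite (hfin : (simApprox β t).Finite) {N : ℕ}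
    (hN : 0 < N) : 0 < ‖latticeResidue ((N : ℝ) • β)‖ := by
  by_contra! hle
  have hmult : ∀ k : ℕ, (k + 1) * N ∈ simApprox β t := by
    intro k
    have hpos : 0 < (k + 1) * N := by positivity
    refine ⟨hpos, lt_of_le_of_lt ?_ (Real.rpow_pos_of_pos (Nat.cast_pos.2 hpos) _)⟩
    calc ‖latticeResidue ((((k + 1) * N : ℕ) : ℝ) • β)‖
        = ‖latticeResidue (((k + 1 : ℕ) : ℝ) • (N : ℝ) • β)‖ := by rw [smul_smul, Nat.cast_mul]
      _ ≤ ((k + 1 : ℕ) : ℝ) * ‖latticeResidue ((N : ℝ) • β)‖ :=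
        norm_latticeResidue_natCast_smul_le _ _
      _ ≤ 0 := mul_nonpos_of_nonneg_of_nonpos (Nat.cast_nonneg _) hle
  refine Set.infinite_of_injective_forall_mem (fun k l hkl => ?_) hmult hfin
  simpa [hN.ne'] using hkl

theorem latticeResidue_intCast_smul_ne_zero (hfin : (simApprox β t).Finite) {z : ℤ} (hz : z ≠ 0) :
    latticeResidue ((z : ℝ) • β) ≠ 0 := by
  have hpos := norm_latticeResidue_pos_of_simApprox_finite hfin (Int.natAbs_pos.2 hz)
  rw [← norm_pos_iff]
  rcases Int.natAbs_eq z with habs | habs <;> rw [habs]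
  · simpa using hpos
  · simpa [neg_smul, norm_latticeResidue_neg] using hpos

theorem exists_pos_le_rpow_mul_norm_latticeResidue (hfin : (simApprox β t).Finite) :
    ∃ c > 0, ∀ N : ℕ, 0 < N → c ≤ (N : ℝ) ^ t * ‖latticeResidue ((N : ℝ) • β)‖ := by
  have hpos : ∀ N ∈ simApprox β t, 0 < (N : ℝ) ^ t * ‖latticeResidue ((N : ℝ) • β)‖ :=
    fun N hN => mul_pos (Real.rpow_pos_of_pos (Nat.cast_pos.2 hN.1) _)
      (norm_latticeResidue_pos_of_simApprox_finite hfin hN.1)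
  obtain ⟨c, hc, hle⟩ := exists_pos_forall_le_of_finite hfin hpos
  refine ⟨min c 1, lt_min hc one_pos, fun N hN => ?_⟩
  by_cases hmem : N ∈ simApprox β t
  · exact (min_le_left _ _).trans (hle N hmem)
  · have hge : (N : ℝ) ^ (-t) ≤ ‖latticeResidue ((N : ℝ) • β)‖ :=
      not_lt.1 fun hlt => hmem ⟨hN, hlt⟩
    rw [Real.rpow_neg (Nat.cast_nonneg _)] at hge
    refine (min_le_right _ _).trans ?_
    rwa [← inv_le_iff_one_le_mul₀' (Real.rpow_pos_of_pos (Nat.cast_pos.2 hN) _)]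

end SimultaneousApproximation

theorem exists_nat_rpow_mem_Ioc {s Y : ℝ} (hs : 0 < s) (hY : 1 ≤ Y) :
    ∃ K : ℕ, 0 < K ∧ (K : ℝ) ^ s ∈ Ioc Y (2 ^ s * Y) := by
  set X : ℝ := Y ^ (1 / s) with hX
  have hX1 : 1 ≤ X := Real.one_le_rpow hY (by positivity)
  have hXY : X ^ s = Y := by
    rw [hX, ← Real.rpow_mul (by positivity), one_div_mul_cancel hs.ne', Real.rpow_one]
  have hKX : ((⌊X⌋₊ + 1 : ℕ) : ℝ) ≤ 2 * X := by
    push_cast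
    linarith [Nat.floor_le (zero_le_one.trans hX1)]
  refine ⟨⌊X⌋₊ + 1, Nat.succ_pos _, ?_, ?_⟩
  · rw [← hXY]
    exact Real.rpow_lt_rpow (by positivity) (mod_cast Nat.lt_floor_add_one X) hs
  · rw [← hXY, ← Real.mul_rpow zero_le_two (by positivity)]
    exact Real.rpow_le_rpow (by positivity) hKX hs.le

section Counting

variable {ι : Type*} [Fintype ι] {β : ι → ℝ} {t c : ℝ}

/-- The pigeonholes subdivide the pairs `(N, latticeResidue (N • β))` along the `N`-axis and along
the coordinates where `β` does not vanish. -/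
theorem exists_norm_latticeResidue_le_of_card_lt {S : Finset ℕ} {Q K : ℕ} {D : ℝ} (hQ : 0 < Q)
    (hK : 0 < K) (hD : 0 < D)
    (hS : ∀ N ∈ S, N ≤ Q ∧ ‖latticeResidue ((N : ℝ) • β)‖ ≤ D)
    (hcard : K ^ (hammingNorm β + 1) < S.card) :
    ∃ M : ℕ, 0 < M ∧ (M : ℝ) * K < 2 * Q ∧ ‖latticeResidue ((M : ℝ) • β)‖ ≤ 3 * D / K := by
  have hQ0 : (0 : ℝ) < Q := Nat.cast_pos.2 hQ
  have hK0 : (0 : ℝ) < K := Nat.cast_pos.2 hK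
  let u : ℕ → Option {i // β i ≠ 0} → ℝ := fun N o =>
    o.elim ((N : ℝ) / (2 * Q)) fun i => (latticeResidue ((N : ℝ) • β) i + D) / (3 * D)
  have hu : ∀ N ∈ S, ∀ o, u N o ∈ Ico (0 : ℝ) 1 := by
    rintro N hN (_ | i)
    · have hNQ : (N : ℝ) ≤ Q := Nat.cast_le.2 (hS N hN).1
      exact ⟨div_nonneg (Nat.cast_nonneg _) (by positivity),
        (div_lt_one (by positivity)).2 (by linarith)⟩
    · have hres := abs_le.1 ((norm_le_pi_norm (latticeResidue ((N : ℝ) • β)) i.1).trans (hS N hN).2)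
      exact ⟨div_nonneg (by linarith) (by positivity),
        (div_lt_one (by positivity)).2 (by linarith)⟩
  have hcard' : K ^ Fintype.card (Option {i // β i ≠ 0}) < S.card := by
    rwa [Fintype.card_option, Fintype.card_subtype]
  have hpair : ∃ N ∈ S, ∃ N' ∈ S, N' < N ∧ ∀ o, |u N o - u N' o| < 1 / K := by
    obtain ⟨N, hN, N', hN', hne, hclose⟩ := exists_ne_forall_abs_sub_lt_one_div hK hu hcard'
    rcases hne.lt_or_gt with hlt | hlt
    · exact ⟨N', hN', N, hN, hlt, fun o => by rw [abs_sub_comm]; exact hclose o⟩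
    · exact ⟨N, hN, N', hN', hlt, hclose⟩
  obtain ⟨N, -, N', -, hlt, hclose⟩ := hpair
  refine ⟨N - N', Nat.sub_pos_of_lt hlt, ?_, ?_⟩
  · have hdist := (abs_lt.1 (hclose none)).2
    simp only [u, Option.elim_none] at hdist
    rw [← sub_div, div_lt_div_iff₀ (by positivity) hK0, one_mul] at hdist
    rwa [Nat.cast_sub hlt.le]
  · rw [Nat.cast_sub hlt.le, sub_smul]
    refine (norm_latticeResidue_sub_le _ _).trans
      ((pi_norm_le_iff_of_nonneg (by positivity)).2 fun i => ?_)
    by_cases hi : β i = 0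
    · simp only [latticeResidue, Pi.sub_apply, Pi.smul_apply, hi, smul_zero, round_zero,
        Int.cast_zero, sub_zero, norm_zero]
      positivity
    · have hdist := (hclose (some ⟨i, hi⟩)).le
      simp only [u, Option.elim_some] at hdist
      rw [← sub_div, add_sub_add_right_eq_sub, abs_div, abs_of_pos (show 0 < 3 * D by positivity),
        div_le_div_iff₀ (by positivity) hK0, one_mul] at hdist
      rwa [Pi.sub_apply, Real.norm_eq_abs, le_div_iff₀ hK0]

theorem card_le_pow_of_norm_latticeResidue_le (ht : 0 ≤ t) (hc : 0 < c)
    (hβ : ∀ N : ℕ, 0 < N → c ≤ (N : ℝ) ^ t * ‖latticeResidue ((N : ℝ) • β)‖)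
    {S : Finset ℕ} {Q K : ℕ} {D : ℝ} (hQ : 0 < Q) (hK : 0 < K) (hD : 0 < D)
    (hS : ∀ N ∈ S, N ≤ Q ∧ ‖latticeResidue ((N : ℝ) • β)‖ ≤ D)
    (hKQ : 3 * D * (2 * Q) ^ t / c < (K : ℝ) ^ (t + 1)) :
    S.card ≤ K ^ (hammingNorm β + 1) := by
  have hK0 : (0 : ℝ) < K := Nat.cast_pos.2 hK
  by_contra! hlt
  obtain ⟨M, hM, hMK, hMD⟩ := exists_norm_latticeResidue_le_of_card_lt hQ hK hD hS hlt
  refine hKQ.not_ge ((le_div_iff₀ hc).2 ?_)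
  calc (K : ℝ) ^ (t + 1) * c
      ≤ (K : ℝ) ^ (t + 1) * ((M : ℝ) ^ t * (3 * D / K)) := by
        gcongr
        exact (hβ M hM).trans (by gcongr)
    _ = 3 * D * ((M : ℝ) * K) ^ t := by
        rw [Real.rpow_add_one hK0.ne', Real.mul_rpow (Nat.cast_nonneg _) hK0.le]
        field_simp
    _ ≤ 3 * D * (2 * Q) ^ t :=
        mul_le_mul_of_nonneg_left (Real.rpow_le_rpow (by positivity) hMK.le ht) (by positivity)

theorem card_le_of_norm_latticeResidue_le (ht : (hammingNorm β : ℝ) ≤ t) (hc : 0 < c)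
    (hβ : ∀ N : ℕ, 0 < N → c ≤ (N : ℝ) ^ t * ‖latticeResidue ((N : ℝ) • β)‖)
    {S : Finset ℕ} {Q : ℕ} {D : ℝ} (hD : 0 < D)
    (hS : ∀ N ∈ S, 0 < N ∧ N ≤ Q ∧ ‖latticeResidue ((N : ℝ) • β)‖ ≤ D) :
    (S.card : ℝ) ≤ 2 ^ (t + 1) * (3 * 2 ^ t / c) * (Q : ℝ) ^ t * D := by
  have ht0 : 0 ≤ t := (Nat.cast_nonneg _).trans ht
  rcases S.eq_empty_or_nonempty with rfl | ⟨N₀, hN₀⟩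
  · simp only [Finset.card_empty, Nat.cast_zero]; positivity
  obtain ⟨hN₀pos, hN₀Q, hN₀D⟩ := hS N₀ hN₀
  have hQ : 0 < Q := hN₀pos.trans_le hN₀Q
  set Y : ℝ := 3 * D * (2 * Q) ^ t / c with hY
  have hY1 : 1 ≤ Y := by
    have hN₀Q' : (N₀ : ℝ) ≤ 2 * Q := by
      have : (N₀ : ℝ) ≤ Q := Nat.cast_le.2 hN₀Q
      linarith
    rw [hY, one_le_div hc]
    calc c ≤ (N₀ : ℝ) ^ t * ‖latticeResidue ((N₀ : ℝ) • β)‖ := hβ N₀ hN₀pos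
      _ ≤ (2 * Q) ^ t * D := by gcongr
      _ ≤ 3 * D * (2 * Q) ^ t := by
        have : 0 ≤ (2 * (Q : ℝ)) ^ t * D := by positivity
        linarith
  obtain ⟨K, hK, hYK, hKY⟩ := exists_nat_rpow_mem_Ioc (show 0 < t + 1 by positivity) hY1
  have hcard : S.card ≤ K ^ (hammingNorm β + 1) :=
    card_le_pow_of_norm_latticeResidue_le ht0 hc hβ hQ hK hD (fun N hN => (hS N hN).2) hYK
  calc (S.card : ℝ) ≤ (K : ℝ) ^ ((hammingNorm β : ℝ) + 1) := by exact_mod_cast hcard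
    _ ≤ (K : ℝ) ^ (t + 1) :=
      Real.rpow_le_rpow_of_exponent_le (Nat.one_le_cast.2 hK) (by linarith)
    _ ≤ 2 ^ (t + 1) * Y := hKY
    _ = 2 ^ (t + 1) * (3 * 2 ^ t / c) * (Q : ℝ) ^ t * D := by
      rw [hY, Real.mul_rpow zero_le_two (Nat.cast_nonneg _)]
      ring

end Counting

section Summability

theorem sum_inv_le_mul_harmonic {κ : Type*} (S : Finset κ) (g : κ → ℝ) {A : ℝ}
    (hg : ∀ i ∈ S, 0 < g i)
    (hcard : ∀ D > 0, ∀ S' ⊆ S, (∀ i ∈ S', g i ≤ D) → (S'.card : ℝ) ≤ A * D) :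
    ∑ i ∈ S, (g i)⁻¹ ≤ A * (harmonic S.card : ℝ) := by
  classical
  revert hg hcard
  refine Finset.induction_on_max_value g S (by simp) fun a s ha hmax ih hg hcard => ?_
  have hga : 0 < g a := hg a (Finset.mem_insert_self _ _)
  have hsum : ∑ i ∈ s, (g i)⁻¹ ≤ A * (harmonic s.card : ℝ) :=
    ih (fun i hi => hg i (Finset.mem_insert_of_mem hi))
      fun D hD S' hS' => hcard D hD S' (hS'.trans (Finset.subset_insert _ _))
  have hle : ((insert a s).card : ℝ) ≤ A * g a :=
    hcard (g a) hga _ subset_rfl (Finset.forall_mem_insert _ _ _ |>.2 ⟨le_rfl, hmax⟩)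
  rw [Finset.card_insert_of_notMem ha, Nat.cast_add_one] at hle
  have hinv : (g a)⁻¹ ≤ A * ((s.card : ℝ) + 1)⁻¹ := by
    rw [← div_eq_mul_inv, inv_eq_one_div, div_le_div_iff₀ hga (by positivity)]
    linarith
  rw [Finset.sum_insert ha, Finset.card_insert_of_notMem ha, harmonic_succ]
  push_cast
  linarith

theorem summable_rpow_neg_mul_of_sum_isBigO {f : ℕ → ℝ} (hf : ∀ N, 0 ≤ f N) {u τ : ℝ}
    (hu : 0 ≤ u) (huτ : u < τ)
    (hO : (fun Q : ℕ => ∑ N ∈ Finset.Icc 1 Q, f N) =O[atTop] fun Q : ℕ => (Q : ℝ) ^ u) :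
    Summable fun N : ℕ => (N : ℝ) ^ (-τ) * f N := by
  have hL : LSeriesSummable (fun N => (f N : ℂ)) τ :=
    LSeriesSummable_of_sum_norm_bigO_and_nonneg hO hf hu (by simpa using huτ)
  refine (summable_nat_add_iff 1).1 (((summable_nat_add_iff 1).2 hL.norm).congr fun N => ?_)
  rw [LSeries.term_of_ne_zero N.succ_ne_zero, norm_div, Complex.norm_real,
    Real.norm_of_nonneg (hf _), Complex.norm_natCast_cpow_of_pos N.succ_pos, Complex.ofReal_re,
    Real.rpow_neg (Nat.cast_nonneg _), div_eq_inv_mul]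

theorem isBigO_mul_rpow_mul_one_add_log (B : ℝ) {t u : ℝ} (htu : t < u) :
    (fun x : ℝ => B * x ^ t * (1 + Real.log x)) =O[atTop] fun x : ℝ => x ^ u := by
  have hlog : (fun x : ℝ => 1 + Real.log x) =O[atTop] fun x : ℝ => x ^ (u - t) := by
    refine Asymptotics.IsBigO.add ?_ (isLittleO_log_rpow_atTop (sub_pos.2 htu)).isBigO
    exact (Asymptotics.isLittleO_const_left.2 <| Or.inr <| tendsto_norm_atTop_atTop.comp <|
      tendsto_rpow_atTop (sub_pos.2 htu)).isBigO
  refine (((Asymptotics.isBigO_refl (fun x : ℝ => x ^ t) atTop).const_mul_left B).mul hlog).congr'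
    EventuallyEq.rfl ?_
  filter_upwards [eventually_gt_atTop 0] with x hx
  rw [← Real.rpow_add hx, add_sub_cancel]

variable {ι : Type*} [Fintype ι] {β : ι → ℝ} {t : ℝ}

theorem exists_sum_inv_norm_latticeResidue_le (ht : (hammingNorm β : ℝ) ≤ t)
    (hfin : (simApprox β t).Finite) :
    ∃ B : ℝ, ∀ Q : ℕ, ∑ N ∈ Finset.Icc 1 Q, ‖latticeResidue ((N : ℝ) • β)‖⁻¹
      ≤ B * (Q : ℝ) ^ t * (1 + Real.log Q) := by
  obtain ⟨c, hc, hβ⟩ := exists_pos_le_rpow_mul_norm_latticeResidue hfin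
  refine ⟨2 ^ (t + 1) * (3 * 2 ^ t / c), fun Q => ?_⟩
  calc ∑ N ∈ Finset.Icc 1 Q, ‖latticeResidue ((N : ℝ) • β)‖⁻¹
      ≤ 2 ^ (t + 1) * (3 * 2 ^ t / c) * (Q : ℝ) ^ t * (harmonic (Finset.Icc 1 Q).card : ℝ) := by
        refine sum_inv_le_mul_harmonic _ _
          (fun N hN => norm_latticeResidue_pos_of_simApprox_finite hfin (Finset.mem_Icc.1 hN).1)
          fun D hD S hS hle => card_le_of_norm_latticeResidue_le ht hc hβ hD fun N hN => ?_
        exact ⟨(Finset.mem_Icc.1 (hS hN)).1, (Finset.mem_Icc.1 (hS hN)).2, hle N hN⟩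
    _ ≤ _ := by
        rw [Nat.card_Icc, Nat.add_sub_cancel]
        gcongr
        exact harmonic_le_one_add_log Q

theorem summable_abs_rpow_neg_mul_inv_norm_latticeResidue (ht : (hammingNorm β : ℝ) ≤ t) {τ : ℝ}
    (htτ : t < τ) (hfin : (simApprox β t).Finite) :
    Summable fun z : ℤ => |(z : ℝ)| ^ (-τ) * ‖latticeResidue ((z : ℝ) • β)‖⁻¹ := by
  obtain ⟨B, hB⟩ := exists_sum_inv_norm_latticeResidue_le ht hfin
  obtain ⟨u, htu, huτ⟩ := exists_between htτ
  have hu : 0 ≤ u := (Nat.cast_nonneg _).trans (ht.trans htu.le)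
  have hO : (fun Q : ℕ => ∑ N ∈ Finset.Icc 1 Q, ‖latticeResidue ((N : ℝ) • β)‖⁻¹)
      =O[atTop] fun Q : ℕ => (Q : ℝ) ^ u := by
    refine Asymptotics.IsBigO.trans (Asymptotics.isBigO_of_le _ fun Q => ?_)
      ((isBigO_mul_rpow_mul_one_add_log B htu).comp_tendsto tendsto_natCast_atTop_atTop)
    rw [Real.norm_of_nonneg (Finset.sum_nonneg fun N _ => inv_nonneg.2 (norm_nonneg _))]
    exact (hB Q).trans (Real.le_norm_self _)
  have hnat : Summable fun N : ℕ => (N : ℝ) ^ (-τ) * ‖latticeResidue ((N : ℝ) • β)‖⁻¹ :=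
    summable_rpow_neg_mul_of_sum_isBigO (fun N => inv_nonneg.2 (norm_nonneg _)) hu huτ hO
  exact Summable.of_nat_of_neg (by simpa using hnat)
    (by simpa [neg_smul, norm_latticeResidue_neg] using hnat)

end Summability

section Slab

open Matrix

variable {ι : Type*} [Fintype ι]

theorem exists_norm_apply_eq_pi_norm {E : Type*} [SeminormedAddCommGroup E] [Nonempty ι]
    (f : ι → E) : ∃ i, ‖f i‖ = ‖f‖ := by
  obtain ⟨i, hi⟩ := Finite.exists_max fun i => ‖f i‖
  exact ⟨i, (norm_le_pi_norm f i).antisymm ((pi_norm_le_iff_of_nonempty _).2 hi)⟩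

theorem abs_dotProduct_le (w x : ι → ℝ) : |w ⬝ᵥ x| ≤ Fintype.card ι * (‖w‖ * ‖x‖) := by
  calc |w ⬝ᵥ x| ≤ ∑ i, |w i * x i| := Finset.abs_sum_le_sum_abs _ _
    _ ≤ ∑ _i : ι, ‖w‖ * ‖x‖ := Finset.sum_le_sum fun i _ => by
        rw [abs_mul]
        exact mul_le_mul (norm_le_pi_norm w i) (norm_le_pi_norm x i) (abs_nonneg _) (norm_nonneg _)
    _ = Fintype.card ι * (‖w‖ * ‖x‖) := by simp

/-- The linear change of variables replaces a coordinate along which `w` is largest by `w ⬝ᵥ x`. -/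
theorem volume_ball_inter_slab_le {w : ι → ℝ} (hw : w ≠ 0) (d ε : ℝ) {R : ℝ} (hR : 0 < R) :
    volume (ball 0 R ∩ {x | |w ⬝ᵥ x + d| < ε})
      ≤ ENNReal.ofReal ((2 * R) ^ (Fintype.card ι - 1) * (2 * ε) / ‖w‖) := by
  classical
  have : Nonempty ι := (Function.ne_iff.1 hw).nonempty
  obtain ⟨i, hi⟩ := exists_norm_apply_eq_pi_norm w
  have hwi : w i ≠ 0 := norm_ne_zero_iff.1 (hi ▸ norm_ne_zero_iff.2 hw)
  let M : Matrix ι ι ℝ := (1 : Matrix ι ι ℝ).updateRow i w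
  have hdet : LinearMap.det (Matrix.toLin' M) = w i := by
    rw [LinearMap.det_toLin', ← Matrix.cramer_transpose_apply, Matrix.transpose_one,
      Matrix.cramer_one]
    rfl
  let box : Set (ι → ℝ) := Set.pi univ fun j =>
    Ioo (if j = i then -d - ε else -R) (if j = i then -d + ε else R)
  have hsub : ball 0 R ∩ {x | |w ⬝ᵥ x + d| < ε} ⊆ Matrix.toLin' M ⁻¹' box := by
    rintro x ⟨hx, hwx⟩ j -
    have hxj : |x j| < R := (norm_le_pi_norm x j).trans_lt (mem_ball_zero_iff.1 hx)
    rw [mem_ofPred_eq, abs_lt] at hwx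
    by_cases hj : j = i
    · simp only [hj, M, toLin'_apply, mulVec, updateRow_self, if_true, mem_Ioo]
      constructor <;> linarith
    · simpa [hj, M, mulVec, updateRow_ne, one_apply, dotProduct] using abs_lt.1 hxj
  have hbox : volume box = ENNReal.ofReal ((2 * R) ^ (Fintype.card ι - 1) * (2 * ε)) := by
    rw [Real.volume_pi_Ioo, ← Finset.prod_erase_mul _ _ (Finset.mem_univ i),
      Finset.prod_congr rfl (g := fun _ => ENNReal.ofReal (2 * R)),
      ENNReal.ofReal_mul (show 0 ≤ (2 * R) ^ (Fintype.card ι - 1) by positivity),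
      ENNReal.ofReal_pow (by positivity)]
    · simp [two_mul]
    · intro j hj
      simp [Finset.ne_of_mem_erase hj, two_mul]
  refine (measure_mono hsub).trans_eq ?_
  rw [Measure.addHaar_preimage_linearMap _ (by rwa [hdet]), hdet, hbox,
    ← ENNReal.ofReal_mul (by positivity), abs_inv, ← Real.norm_eq_abs, hi, div_eq_inv_mul]

theorem card_Icc_ceil_floor_le {x y : ℝ} (hxy : x ≤ y + 1) :
    ((Finset.Icc ⌈x⌉ ⌊y⌋).card : ℝ) ≤ y - x + 1 := by
  rw [Int.card_Icc, ← Int.cast_natCast, Int.ofNat_toNat, Int.cast_max, max_le_iff]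
  push_cast
  constructor <;> linarith [Int.floor_le y, Int.le_ceil x]

theorem exists_volume_ball_inter_integer_slabs_le {R κ : ℝ} (hR : 0 < R) (hκ : 0 < κ) :
    ∃ C : ℝ, ∀ w : ι → ℝ, κ ≤ ‖w‖ → ∀ d : ℝ, ∀ ε ∈ Ioc (0 : ℝ) 1,
      volume (ball 0 R ∩ {x | ∃ p : ℤ, |w ⬝ᵥ x + (d + p)| < ε}) ≤ ENNReal.ofReal (C * ε) := by
  refine ⟨(2 * R) ^ (Fintype.card ι - 1) * 2 * (2 * (Fintype.card ι * R) + 3 / κ),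
    fun w hw d ε hε => ?_⟩
  have hw0 : 0 < ‖w‖ := hκ.trans_le hw
  set T : ℝ := Fintype.card ι * (‖w‖ * R) + 1 with hT
  have hT0 : 0 < T := by positivity
  let P : Finset ℤ := Finset.Icc ⌈-d - T⌉ ⌊-d + T⌋
  have hP : (P.card : ℝ) ≤ 2 * T + 1 :=
    (card_Icc_ceil_floor_le (by linarith)).trans_eq (by ring)
  have hsub : ball 0 R ∩ {x | ∃ p : ℤ, |w ⬝ᵥ x + (d + p)| < ε}
      ⊆ ⋃ p ∈ P, ball 0 R ∩ {x | |w ⬝ᵥ x + (d + p)| < ε} := by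
    rintro x ⟨hx, p, hp⟩
    refine mem_iUnion₂.2 ⟨p, ?_, hx, hp⟩
    have hwx : |w ⬝ᵥ x| ≤ Fintype.card ι * (‖w‖ * R) :=
      (abs_dotProduct_le w x).trans (by gcongr; exact (mem_ball_zero_iff.1 hx).le)
    rw [abs_le] at hwx
    rw [abs_lt] at hp
    rw [Finset.mem_Icc, Int.ceil_le, Int.le_floor]
    constructor <;> linarith [hε.2]
  refine (measure_mono hsub).trans <| (measure_biUnion_finset_le _ _).trans <|
    (Finset.sum_le_sum fun (p : ℤ) _ =>
      volume_ball_inter_slab_le (norm_pos_iff.1 hw0) (d + p) ε hR).trans ?_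
  rw [Finset.sum_const, nsmul_eq_mul, ← ENNReal.ofReal_natCast,
    ← ENNReal.ofReal_mul (Nat.cast_nonneg _)]
  refine ENNReal.ofReal_le_ofReal ?_
  have hε0 : 0 < ε := hε.1
  calc (P.card : ℝ) * ((2 * R) ^ (Fintype.card ι - 1) * (2 * ε) / ‖w‖)
      ≤ (2 * T + 1) * ((2 * R) ^ (Fintype.card ι - 1) * (2 * ε) / ‖w‖) := by gcongr
    _ = (2 * R) ^ (Fintype.card ι - 1) * 2 * (2 * (Fintype.card ι * R) + 3 / ‖w‖) * ε := by
        rw [hT]; field_simp; ring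
    _ ≤ _ := by gcongr

end Slab

section AffineForm

open Matrix

variable {m : ℕ}

/-- The affine form on `ℝᵐ` with coefficient vector `c`, whose last entry is the constant term. -/
def affineEval (c : Fin (m + 1) → ℝ) (x : Fin m → ℝ) : ℝ := Fin.init c ⬝ᵥ x + c (Fin.last m)

theorem pi_norm_le_max_norm_init_norm_last (c : Fin (m + 1) → ℝ) :
    ‖c‖ ≤ max ‖Fin.init c‖ ‖c (Fin.last m)‖ :=
  (pi_norm_le_iff_of_nonneg (le_max_of_le_left (norm_nonneg _))).2 <|
    Fin.lastCases (le_max_right _ _) fun i => le_max_of_le_left (norm_le_pi_norm (Fin.init c) i)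

theorem norm_init_le (c : Fin (m + 1) → ℝ) : ‖Fin.init c‖ ≤ ‖c‖ := pi_norm_comp_le c Fin.castSucc

theorem abs_affineEval_le (c : Fin (m + 1) → ℝ) (x : Fin m → ℝ) :
    |affineEval c x| ≤ (m * ‖x‖ + 1) * ‖c‖ := by
  calc |affineEval c x| ≤ |Fin.init c ⬝ᵥ x| + |c (Fin.last m)| := abs_add_le _ _
    _ ≤ m * (‖c‖ * ‖x‖) + ‖c‖ := by
        refine add_le_add ((abs_dotProduct_le _ _).trans ?_) (norm_le_pi_norm c _)
        rw [Fintype.card_fin]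
        gcongr
        exact norm_init_le c
    _ = (m * ‖x‖ + 1) * ‖c‖ := by ring

theorem norm_le_two_mul_abs_affineEval {R : ℝ} {c : Fin (m + 1) → ℝ}
    (hc : (2 * (m * R) + 1) * ‖Fin.init c‖ < ‖c‖) {x : Fin m → ℝ} (hx : ‖x‖ ≤ R) :
    ‖c‖ ≤ 2 * |affineEval c x| := by
  have hR : 0 ≤ R := (norm_nonneg x).trans hx
  have hlast : ‖c‖ ≤ |c (Fin.last m)| := by
    refine (le_max_iff.1 (pi_norm_le_max_norm_init_norm_last c)).resolve_left fun hinit => ?_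
    refine hc.not_ge (hinit.trans (le_mul_of_one_le_left (norm_nonneg _) ?_))
    linarith [show 0 ≤ m * R by positivity]
  have hlin : |Fin.init c ⬝ᵥ x| ≤ m * (‖Fin.init c‖ * R) :=
    (abs_dotProduct_le _ _).trans (by rw [Fintype.card_fin]; gcongr)
  have htri : |c (Fin.last m)| ≤ |affineEval c x| + |Fin.init c ⬝ᵥ x| := by
    simpa [affineEval] using abs_sub (affineEval c x) (Fin.init c ⬝ᵥ x)
  linarith [norm_nonneg (Fin.init c)]

/-- Either the linear part of the form is comparable to the whole form, or the constant term
dominates it on the ball. -/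
theorem exists_volume_ball_inter_abs_affineEval_lt_le {R : ℝ} (hR : 0 < R) :
    ∃ C : ℝ, ∀ c : Fin (m + 1) → ℝ, c ≠ 0 → ∀ ε : ℝ,
      volume (ball 0 R ∩ {x | |affineEval c x| < ε}) ≤ ENNReal.ofReal (C * ε / ‖c‖) := by
  set A : ℝ := 2 * (m * R) + 1
  refine ⟨(2 * R) ^ (m - 1) * 2 * A + (2 * R) ^ m * 2, fun c hc ε => ?_⟩
  rcases le_or_gt ε 0 with hε | hε
  · have hempty : {x | |affineEval c x| < ε} = ∅ :=
      eq_empty_of_forall_notMem fun x hx => (hε.trans (abs_nonneg _)).not_gt hx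
    simp [hempty]
  have hc0 : 0 < ‖c‖ := norm_pos_iff.2 hc
  rcases le_or_gt ‖c‖ (A * ‖Fin.init c‖) with hle | hlt
  · have hw0 : 0 < ‖Fin.init c‖ := pos_of_mul_pos_right (hc0.trans_le hle) (by positivity)
    refine (volume_ball_inter_slab_le (norm_pos_iff.1 hw0) _ ε hR).trans
      (ENNReal.ofReal_le_ofReal ?_)
    rw [Fintype.card_fin]
    calc (2 * R) ^ (m - 1) * (2 * ε) / ‖Fin.init c‖
        = (2 * R) ^ (m - 1) * 2 * ε * (1 / ‖Fin.init c‖) := by ring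
      _ ≤ (2 * R) ^ (m - 1) * 2 * ε * (A / ‖c‖) := by
          gcongr ?_ * ?_
          rwa [div_le_div_iff₀ hw0 hc0, one_mul]
      _ = (2 * R) ^ (m - 1) * 2 * A * ε / ‖c‖ := by ring
      _ ≤ _ := by gcongr; linarith [show 0 ≤ (2 * R) ^ m * 2 by positivity]
  · rcases (ball 0 R ∩ {x | |affineEval c x| < ε}).eq_empty_or_nonempty with hempty | ⟨x, hx, hxε⟩
    · simp [hempty]
    have hcε : ‖c‖ ≤ 2 * ε :=
      (norm_le_two_mul_abs_affineEval hlt (mem_ball_zero_iff.1 hx).le).trans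
        (mul_le_mul_of_nonneg_left (le_of_lt hxε) zero_le_two)
    refine (measure_mono inter_subset_left).trans ?_
    rw [Real.volume_pi_ball _ hR, Fintype.card_fin]
    refine ENNReal.ofReal_le_ofReal ?_
    calc (2 * R) ^ m ≤ (2 * R) ^ m * (2 * ε / ‖c‖) :=
          le_mul_of_one_le_right (by positivity) ((one_le_div hc0).2 hcε)
      _ = (2 * R) ^ m * 2 * ε / ‖c‖ := by ring
      _ ≤ _ := by
          gcongr
          linarith [show 0 ≤ (2 * R) ^ (m - 1) * 2 * A by positivity]

end AffineForm

section ProdTimes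

variable {n : ℕ} {q : Fin n → ℤ}

theorem prodTimes_eq_prod_max (q : Fin n → ℤ) : prodTimes q = ∏ i, max 1 |(q i : ℝ)| := by
  refine Finset.prod_congr rfl fun i _ => ?_
  split_ifs with hi
  · simp [hi]
  · exact (max_eq_right (mod_cast Int.one_le_abs hi)).symm

theorem one_le_prodTimes (q : Fin n → ℤ) : 1 ≤ prodTimes q := by
  rw [prodTimes_eq_prod_max]
  exact Finset.prod_induction _ (fun x : ℝ => 1 ≤ x) (fun _ _ => one_le_mul_of_one_le_of_one_le)
    le_rfl fun i _ => le_max_left _ _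

theorem prodTimes_pos (q : Fin n → ℤ) : 0 < prodTimes q := zero_lt_one.trans_le (one_le_prodTimes q)

theorem abs_le_prodTimes (q : Fin n → ℤ) (i : Fin n) : |(q i : ℝ)| ≤ prodTimes q := by
  have hrest : (1 : ℝ) ≤ ∏ j ∈ Finset.univ.erase i, max 1 |(q j : ℝ)| :=
    Finset.prod_induction _ (fun x : ℝ => 1 ≤ x) (fun _ _ => one_le_mul_of_one_le_of_one_le)
      le_rfl fun j _ => le_max_left _ _
  rw [prodTimes_eq_prod_max, ← Finset.mul_prod_erase _ _ (Finset.mem_univ i)]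
  exact (le_max_right _ _).trans (le_mul_of_one_le_right (by positivity) hrest)

theorem finite_setOf_prodTimes_lt (n : ℕ) (B : ℝ) : {q : Fin n → ℤ | prodTimes q < B}.Finite := by
  refine (Set.Finite.pi' fun _ : Fin n => finite_Icc (-⌈B⌉) ⌈B⌉).subset fun q hq i => ?_
  have hqi : |(q i : ℝ)| ≤ (⌈B⌉ : ℝ) := (abs_le_prodTimes q i).trans (hq.le.trans (Int.le_ceil B))
  exact abs_le.1 (mod_cast hqi)

theorem prodTimes_le_pow_of_abs_le {U : ℝ} (hU : 1 ≤ U) (hq : ∀ i, |(q i : ℝ)| ≤ U) :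
    prodTimes q ≤ U ^ n := by
  calc prodTimes q ≤ ∏ _i : Fin n, U := by
        rw [prodTimes_eq_prod_max]
        exact Finset.prod_le_prod (fun i _ => by positivity) fun i _ => max_le hU (hq i)
    _ = U ^ n := by simp

theorem prod_ite_ne_zero_eq_pow_hammingNorm {ι : Type*} [Fintype ι] (ν : ι → ℝ) (U : ℝ) :
    ∏ i, (if ν i ≠ 0 then U else 1) = U ^ hammingNorm ν := by
  simp [hammingNorm, Finset.prod_ite]

theorem prodTimes_le_of_abs_sub_smul_lt {ν : Fin n → ℝ} {z : ℝ} (hz : 1 ≤ |z|)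
    (hq : ∀ i, |q i - z * ν i| < 1) : prodTimes q ≤ ((‖ν‖ + 1) * |z|) ^ hammingNorm ν := by
  rw [prodTimes_eq_prod_max, ← prod_ite_ne_zero_eq_pow_hammingNorm]
  refine Finset.prod_le_prod (fun i _ => by positivity) fun i _ => ?_
  split_ifs with hi
  · have hzi : |z * ν i| ≤ |z| * ‖ν‖ := by
      rw [abs_mul]
      exact mul_le_mul_of_nonneg_left (norm_le_pi_norm ν i) (abs_nonneg z)
    have htri : |(q i : ℝ)| - |z * ν i| ≤ |q i - z * ν i| := abs_sub_abs_le_abs_sub _ _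
    refine max_le ?_ ?_ <;> nlinarith [norm_nonneg ν, hq i]
  · have hqi : q i = 0 := by
      have := hq i
      rw [not_not.1 hi, mul_zero, sub_zero] at this
      exact Int.abs_lt_one_iff.1 (mod_cast this)
    simp [hqi]

theorem exists_pow_hammingNorm_le_prodTimes (ν : Fin n → ℝ) :
    ∃ γ > 0, ∀ (q : Fin n → ℤ) (z : ℝ), (∀ i, |q i - z * ν i| ≤ 1) →
      (γ * |z|) ^ hammingNorm ν ≤ prodTimes q := by
  obtain ⟨δ, hδ, hδν⟩ := exists_pos_forall_le_of_finite (toFinite {i | ν i ≠ 0})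
    (f := fun i => |ν i|) fun i hi => abs_pos.2 hi
  refine ⟨δ / 2, half_pos hδ, fun q z hq => ?_⟩
  rw [prodTimes_eq_prod_max, ← prod_ite_ne_zero_eq_pow_hammingNorm]
  refine Finset.prod_le_prod (fun i _ => by split_ifs <;> positivity) fun i _ => ?_
  split_ifs with hi
  · have hzi : δ * |z| ≤ |z * ν i| := by
      rw [abs_mul, mul_comm]
      exact mul_le_mul_of_nonneg_left (hδν i hi) (abs_nonneg z)
    have htri : |z * ν i| - |(q i : ℝ)| ≤ |q i - z * ν i| := by
      rw [abs_sub_comm (q i : ℝ)]; exact abs_sub_abs_le_abs_sub _ _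
    rw [le_max_iff]
    by_contra! hlt
    linarith [hq i]
  · exact le_max_left _ _

theorem tsum_prod_eq_pow {α : Type*} (f : α → ENNReal) (n : ℕ) :
    ∑' q : Fin n → α, ∏ i, f (q i) = (∑' z, f z) ^ n := by
  induction n with
  | zero => simp [tsum_fintype]
  | succ n ih =>
    rw [← (Fin.consEquiv fun _ : Fin (n + 1) => α).tsum_eq, ENNReal.tsum_prod', pow_succ']
    simp only [Fin.consEquiv, Equiv.coe_fn_mk, Fin.prod_univ_succ, Fin.cons_zero, Fin.cons_succ]
    simp_rw [ENNReal.tsum_mul_left, ih, ENNReal.tsum_mul_right]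

theorem tsum_prodTimes_rpow_ne_top (n : ℕ) {η : ℝ} (hη : 1 < η) :
    ∑' q : Fin n → ℤ, ENNReal.ofReal (prodTimes q ^ (-η)) ≠ ⊤ := by
  have hsum : Summable fun z : ℤ => max 1 |(z : ℝ)| ^ (-η) := by
    refine (Real.summable_abs_int_rpow hη).congr_cofinite ?_
    refine (Set.finite_singleton (0 : ℤ)).subset fun z hz => by_contra fun h0 => hz ?_
    have hz1 : (1 : ℝ) ≤ |(z : ℝ)| := mod_cast Int.one_le_abs h0
    simp only [mem_ofPred_eq, max_eq_right hz1]
  have hprod : ∀ q : Fin n → ℤ, ENNReal.ofReal (prodTimes q ^ (-η))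
      = ∏ i, ENNReal.ofReal (max 1 |(q i : ℝ)| ^ (-η)) := by
    intro q
    rw [prodTimes_eq_prod_max, ← Real.finsetProd_rpow _ _ (fun i _ => by positivity),
      ENNReal.ofReal_prod_of_nonneg (fun i _ => by positivity)]
  simp_rw [hprod]
  rw [tsum_prod_eq_pow fun z : ℤ => ENNReal.ofReal (max 1 |(z : ℝ)| ^ (-η))]
  exact ENNReal.pow_ne_top hsum.tsum_ofReal_ne_top

end ProdTimes

section Dirichlet

variable {n : ℕ} {y : Fin n → ℝ}

/-- The integer vectors `q` that witness the inequality defining `omegaT y` at the exponent `v`. -/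
def approxSet (y : Fin n → ℝ) (v : ℝ) : Set (Fin n → ℤ) :=
  {q | ∃ p : ℤ, |(∑ i, (q i : ℝ) * y i) + (p : ℝ)| < prodTimes q ^ (-(v / (n : ℝ)))}

theorem approxSet_anti (y : Fin n → ℝ) : Antitone (approxSet y) := by
  rintro v w hvw q ⟨p, hp⟩
  exact ⟨p, hp.trans_le (Real.rpow_le_rpow_of_exponent_le (one_le_prodTimes q)
    (neg_le_neg (div_le_div_of_nonneg_right hvw (Nat.cast_nonneg n))))⟩

theorem le_omegaT_of_approxSet_infinite {v : ℝ} (h : (approxSet y v).Infinite) :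
    (v : EReal) ≤ omegaT y :=
  le_sSup ⟨v, rfl, h⟩

theorem approxSet_infinite_of_lt_omegaT {v : ℝ} (h : (v : EReal) < omegaT y) :
    (approxSet y v).Infinite := by
  obtain ⟨_, ⟨w, rfl, hw⟩, hvw⟩ := lt_sSup_iff.1 h
  exact hw.mono (approxSet_anti y (EReal.coe_lt_coe_iff.1 hvw).le)

theorem exists_ne_zero_abs_sum_add_lt_one_div_pow (hn : n ≠ 0) {N : ℕ} (hN : 0 < N)
    (y : Fin n → ℝ) :
    ∃ q : Fin n → ℤ, q ≠ 0 ∧ (∀ i, |(q i : ℝ)| ≤ N) ∧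
      ∃ p : ℤ, |(∑ i, (q i : ℝ) * y i) + (p : ℝ)| < 1 / (N : ℝ) ^ n := by
  classical
  let form : (Fin n → ℕ) → ℝ := fun u => ∑ i, (u i : ℝ) * y i
  let box : Finset (Fin n → ℕ) := Fintype.piFinset fun _ => Finset.range (N + 1)
  have hcard : (N ^ n) ^ Fintype.card Unit < box.card := by
    simpa [box] using Nat.pow_lt_pow_left N.lt_succ_self hn
  obtain ⟨u, hu, w, hw, hne, hclose⟩ :=
    exists_ne_forall_abs_sub_lt_one_div (u := fun u (_ : Unit) => Int.fract (form u))
      (pow_pos hN n) (fun u _ _ => ⟨Int.fract_nonneg _, Int.fract_lt_one _⟩) hcard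
  refine ⟨fun i => u i - w i, fun h0 => hne (funext fun i => ?_), fun i => ?_,
    ⌊form w⌋ - ⌊form u⌋, ?_⟩
  · exact_mod_cast sub_eq_zero.1 (congrFun h0 i)
  · have hui : (u i : ℝ) ≤ N :=
      mod_cast Nat.lt_succ_iff.1 (Finset.mem_range.1 (Fintype.mem_piFinset.1 hu i))
    have hwi : (w i : ℝ) ≤ N :=
      mod_cast Nat.lt_succ_iff.1 (Finset.mem_range.1 (Fintype.mem_piFinset.1 hw i))
    push_cast
    exact abs_sub_le_of_nonneg_of_le (Nat.cast_nonneg _) hui (Nat.cast_nonneg _) hwi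
  · have hfract : (∑ i, ((u i - w i : ℤ) : ℝ) * y i) + ((⌊form w⌋ - ⌊form u⌋ : ℤ) : ℝ)
        = Int.fract (form u) - Int.fract (form w) := by
      simp only [form, Int.fract, Int.cast_sub, Int.cast_natCast, sub_mul, Finset.sum_sub_distrib]
      ring
    rw [hfract]
    exact_mod_cast hclose ()

theorem mem_approxSet_natCast (hn : n ≠ 0) {N : ℕ} (hN : 0 < N) {q : Fin n → ℤ}
    (hq : ∀ i, |(q i : ℝ)| ≤ N) {p : ℤ}
    (hp : |(∑ i, (q i : ℝ) * y i) + (p : ℝ)| < 1 / (N : ℝ) ^ n) : q ∈ approxSet y n := by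
  refine ⟨p, hp.trans_le ?_⟩
  rw [div_self (Nat.cast_ne_zero.2 hn), Real.rpow_neg_one, one_div]
  exact inv_anti₀ (prodTimes_pos q) (prodTimes_le_pow_of_abs_le (Nat.one_le_cast.2 hN) hq)

theorem approxSet_infinite_of_sum_add_eq_zero (v : ℝ) {q : Fin n → ℤ} (hq : q ≠ 0) {p : ℤ}
    (hp : (∑ i, (q i : ℝ) * y i) + (p : ℝ) = 0) : (approxSet y v).Infinite := by
  obtain ⟨i, hi⟩ := Function.ne_iff.1 hq
  refine Set.infinite_of_injective_forall_mem (f := fun (k : ℤ) j => k * q j)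
    (fun k l hkl => mul_right_cancel₀ hi (congrFun hkl i)) fun k => ⟨k * p, ?_⟩
  have hk : (∑ j, ((k * q j : ℤ) : ℝ) * y j) + ((k * p : ℤ) : ℝ) = 0 := by
    simp only [Int.cast_mul, mul_assoc, ← Finset.mul_sum, ← mul_add, hp, mul_zero]
  rw [hk, abs_zero]
  exact Real.rpow_pos_of_pos (prodTimes_pos _) _

theorem approxSet_natCast_infinite (hn : n ≠ 0) (y : Fin n → ℝ) : (approxSet y n).Infinite := by
  by_cases hrel : ∃ q : Fin n → ℤ, q ≠ 0 ∧ ∃ p : ℤ, (∑ i, (q i : ℝ) * y i) + (p : ℝ) = 0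
  · obtain ⟨q, hq, p, hp⟩ := hrel
    exact approxSet_infinite_of_sum_add_eq_zero n hq hp
  push Not at hrel
  intro hfin
  let dist : (Fin n → ℤ) → ℝ := fun q =>
    |(∑ i, (q i : ℝ) * y i) - round (∑ i, (q i : ℝ) * y i)|
  have hdist : ∀ q ∈ approxSet y n \ {0}, 0 < dist q := fun q hq => abs_pos.2 <| by
    simpa [sub_eq_add_neg] using hrel q hq.2 (-round (∑ i, (q i : ℝ) * y i))
  obtain ⟨η, hη, hηle⟩ := exists_pos_forall_le_of_finite hfin.sdiff hdist
  obtain ⟨N, hN⟩ := exists_nat_one_div_lt hη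
  obtain ⟨q, hq, hqN, p, hp⟩ := exists_ne_zero_abs_sum_add_lt_one_div_pow hn N.succ_pos y
  have hmem : q ∈ approxSet y n := mem_approxSet_natCast hn N.succ_pos hqN hp
  refine (hηle q ⟨hmem, hq⟩).not_gt ?_
  calc dist q ≤ |(∑ i, (q i : ℝ) * y i) + p| := by
        simpa using round_le (∑ i, (q i : ℝ) * y i) (-p)
    _ < 1 / ((N + 1 : ℕ) : ℝ) ^ n := hp
    _ ≤ 1 / ((N + 1 : ℕ) : ℝ) :=
        one_div_le_one_div_of_le (by positivity)
          (le_self_pow₀ (Nat.one_le_cast.2 N.succ_pos) hn)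
    _ < η := by exact_mod_cast hN

end Dirichlet

section Graph

open Matrix

variable {m : ℕ} (β : Fin (m + 1) → ℝ)

/-- The point over `x` of the graph of `affineEval β`; these points form the hyperplane. -/
def graphPt (x : Fin m → ℝ) : Fin (m + 1) → ℝ := Fin.snoc x (affineEval β x)

/-- The gradient of the affine form `x ↦ q · graphPt β x`. -/
def graphGrad (q : Fin (m + 1) → ℤ) : Fin m → ℝ :=
  fun j => q (Fin.last m) * β j.castSucc + q j.castSucc

/-- The normal vector of the hyperplane `range (graphPt β)` with last coordinate `1`. -/
def normalVec : Fin (m + 1) → ℝ := Fin.snoc (-Fin.init β) 1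

/-- An integer vector with last coordinate `z` nearest to the multiple `z • normalVec β`. -/
noncomputable def nearNormal (z : ℤ) : Fin (m + 1) → ℤ :=
  Fin.snoc (fun j => -round (z * β j.castSucc)) z

theorem measurableEmbedding_graphPt : MeasurableEmbedding (graphPt β) := by
  refine Continuous.measurableEmbedding ?_ fun x y hxy => ?_
  · unfold graphPt affineEval
    fun_prop
  · simpa [graphPt] using congrArg Fin.init hxy

theorem sum_mul_graphPt (q : Fin (m + 1) → ℤ) (x : Fin m → ℝ) :
    ∑ i, (q i : ℝ) * graphPt β x i = graphGrad β q ⬝ᵥ x + q (Fin.last m) * β (Fin.last m) := by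
  simp only [graphPt, graphGrad, affineEval, dotProduct, Fin.init, Fin.sum_univ_castSucc,
    Fin.snoc_castSucc, Fin.snoc_last, add_mul, mul_add, Finset.sum_add_distrib, Finset.mul_sum,
    mul_assoc]
  ring

theorem hammingNorm_le_hammingNorm_normalVec : hammingNorm β ≤ hammingNorm (normalVec β) := by
  refine Finset.card_le_card fun i hi => ?_
  simp only [Finset.mem_filter, Finset.mem_univ, true_and] at hi ⊢
  induction i using Fin.lastCases with
  | last => simp [normalVec]
  | cast j => simpa [normalVec, Fin.init] using hi

theorem hammingNorm_normalVec_pos : 0 < hammingNorm (normalVec β) :=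
  hammingNorm_pos_iff.2 fun h0 => one_ne_zero (α := ℝ) <| by
    simpa [normalVec] using congrFun h0 (Fin.last m)

theorem abs_sub_mul_normalVec_le (q : Fin (m + 1) → ℤ) (i : Fin (m + 1)) :
    |q i - q (Fin.last m) * normalVec β i| ≤ ‖graphGrad β q‖ := by
  induction i using Fin.lastCases with
  | last => simp [normalVec]
  | cast j =>
    simpa [normalVec, Fin.init, graphGrad, add_comm] using norm_le_pi_norm (graphGrad β q) j

theorem nearNormal_last (z : ℤ) : nearNormal β z (Fin.last m) = z := by simp [nearNormal]

theorem nearNormal_injective : Function.Injective (nearNormal β) := fun z w hzw => by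
  simpa only [nearNormal_last] using congrFun hzw (Fin.last m)

theorem nearNormal_zero : nearNormal β 0 = 0 := by
  ext i
  induction i using Fin.lastCases <;> simp [nearNormal]

theorem graphGrad_nearNormal (z : ℤ) :
    graphGrad β (nearNormal β z) = Fin.init (latticeResidue ((z : ℝ) • β)) := by
  ext j
  simp [graphGrad, nearNormal, latticeResidue, Fin.init, sub_eq_add_neg]

theorem norm_graphGrad_nearNormal_le (z : ℤ) :
    ‖graphGrad β (nearNormal β z)‖ ≤ ‖latticeResidue ((z : ℝ) • β)‖ := by
  rw [graphGrad_nearNormal]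
  exact norm_init_le _

theorem abs_nearNormal_sub_mul_normalVec_le (z : ℤ) (i : Fin (m + 1)) :
    |nearNormal β z i - z * normalVec β i| ≤ 1 / 2 := by
  calc |nearNormal β z i - z * normalVec β i|
      ≤ ‖graphGrad β (nearNormal β z)‖ := by
        simpa only [nearNormal_last] using abs_sub_mul_normalVec_le β (nearNormal β z) i
    _ ≤ ‖latticeResidue ((z : ℝ) • β)‖ := norm_graphGrad_nearNormal_le β z
    _ ≤ 1 / 2 := norm_latticeResidue_le_half _

theorem sum_nearNormal_mul_graphPt (z : ℤ) (x : Fin m → ℝ) :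
    (∑ i, (nearNormal β z i : ℝ) * graphPt β x i) - round (z * β (Fin.last m))
      = affineEval (latticeResidue ((z : ℝ) • β)) x := by
  rw [sum_mul_graphPt, graphGrad_nearNormal, nearNormal_last, affineEval, add_sub_assoc]
  rfl

variable {β}

theorem eq_nearNormal_of_norm_graphGrad_lt {q : Fin (m + 1) → ℤ} (hq : ‖graphGrad β q‖ < 1 / 2) :
    q = nearNormal β (q (Fin.last m)) := by
  ext i
  induction i using Fin.lastCases with
  | last => rw [nearNormal_last]
  | cast j =>
    have hround := round_eq_neg_of_abs_add_lt ((norm_le_pi_norm (graphGrad β q) j).trans_lt hq)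
    rw [nearNormal, Fin.snoc_castSucc, hround, neg_neg]

end Graph

section LowerBound

variable {m : ℕ} {β : Fin (m + 1) → ℝ} {v t : ℝ}

theorem eventually_mul_rpow_neg_le {τ t : ℝ} (hτt : τ < t) (C : ℝ) {c : ℝ} (hc : 0 < c) :
    ∀ᶠ x : ℝ in atTop, C * x ^ (-t) ≤ c * x ^ (-τ) := by
  have hlim : Tendsto (fun x : ℝ => C * x ^ (-(t - τ))) atTop (nhds 0) := by
    simpa using (tendsto_rpow_neg_atTop (sub_pos.2 hτt)).const_mul C
  filter_upwards [hlim.eventually_le_const hc, eventually_gt_atTop 0] with x hx hx0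
  calc C * x ^ (-t) = C * x ^ (-(t - τ)) * x ^ (-τ) := by
        rw [mul_assoc, ← Real.rpow_add hx0]; congr 2; ring
    _ ≤ c * x ^ (-τ) := mul_le_mul_of_nonneg_right hx (by positivity)

theorem prodTimes_nearNormal_le {N : ℕ} (hN : 0 < N) :
    prodTimes (nearNormal β N)
      ≤ ((‖normalVec β‖ + 1) * N) ^ hammingNorm (normalVec β) := by
  have hnear : ∀ i, |(nearNormal β N i : ℝ) - (N : ℝ) * normalVec β i| < 1 := fun i => by
    have hle := abs_nearNormal_sub_mul_normalVec_le β N i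
    rw [Int.cast_natCast] at hle
    linarith
  simpa only [Nat.abs_cast] using
    prodTimes_le_of_abs_sub_smul_lt ((Nat.one_le_cast.2 hN).trans (le_abs_self _)) hnear

theorem approxSet_graphPt_infinite (hv : 0 ≤ v)
    (hvt : hammingNorm (normalVec β) * (v / (m + 1 : ℕ)) < t) (hinf : (simApprox β t).Infinite)
    (x : Fin m → ℝ) : (approxSet (graphPt β x) v).Infinite := by
  set s := hammingNorm (normalVec β)
  set ρ : ℝ := v / (m + 1 : ℕ)
  set U : ℝ := ‖normalVec β‖ + 1
  have hlarge := tendsto_natCast_atTop_atTop.eventually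
    (eventually_mul_rpow_neg_le hvt (m * ‖x‖ + 1) (show 0 < U ^ (-(s * ρ)) by positivity))
  obtain ⟨N₀, hN₀⟩ := eventually_atTop.1 hlarge
  refine ((hinf.sdiff (finite_lt_nat N₀)).image
    ((nearNormal_injective β).comp Nat.cast_injective).injOn).mono ?_
  rintro _ ⟨N, ⟨⟨hN, hres⟩, hNlarge⟩, rfl⟩
  refine ⟨-round (N * β (Fin.last m)), ?_⟩
  have hform := sum_nearNormal_mul_graphPt β N x
  rw [Int.cast_natCast] at hform
  simp only [Function.comp_apply, Int.cast_neg, ← sub_eq_add_neg, hform]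
  calc |affineEval (latticeResidue ((N : ℝ) • β)) x|
      ≤ (m * ‖x‖ + 1) * ‖latticeResidue ((N : ℝ) • β)‖ := abs_affineEval_le _ _
    _ < (m * ‖x‖ + 1) * (N : ℝ) ^ (-t) := by gcongr
    _ ≤ U ^ (-(s * ρ)) * (N : ℝ) ^ (-(s * ρ)) := hN₀ N (not_lt.1 hNlarge)
    _ = ((U * N) ^ s) ^ (-ρ) := by
        rw [← Real.mul_rpow (by positivity) (Nat.cast_nonneg _), ← Real.rpow_natCast,
          ← Real.rpow_mul (by positivity), mul_neg]
    _ ≤ prodTimes (nearNormal β N) ^ (-ρ) :=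
        Real.rpow_le_rpow_of_nonpos (prodTimes_pos _) (prodTimes_nearNormal_le hN)
          (neg_nonpos.2 (by positivity))

end LowerBound

section UpperBound

open Matrix

variable {m : ℕ} (β : Fin (m + 1) → ℝ) {v t R : ℝ}

theorem ae_finite_approxSet_graphPt_norm_graphGrad_ge (hv : 1 < v / (m + 1 : ℕ)) (hR : 0 < R)
    {κ : ℝ} (hκ : 0 < κ) :
    ∀ᵐ x : Fin m → ℝ, x ∈ ball 0 R →
      {q ∈ approxSet (graphPt β x) v | κ ≤ ‖graphGrad β q‖}.Finite := by
  obtain ⟨C, hC⟩ := exists_volume_ball_inter_integer_slabs_le (ι := Fin m) hR hκ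
  let slabs : (Fin (m + 1) → ℤ) → Set (Fin m → ℝ) := fun q =>
    {x | κ ≤ ‖graphGrad β q‖ ∧ x ∈ ball 0 R ∧ ∃ p : ℤ,
      |graphGrad β q ⬝ᵥ x + (q (Fin.last m) * β (Fin.last m) + p)|
        < prodTimes q ^ (-(v / (m + 1 : ℕ)))}
  have hvolume : ∀ q, volume (slabs q)
      ≤ ENNReal.ofReal C * ENNReal.ofReal (prodTimes q ^ (-(v / (m + 1 : ℕ)))) := by
    intro q
    rw [← ENNReal.ofReal_mul' (Real.rpow_nonneg (prodTimes_pos q).le _)]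
    by_cases hq : κ ≤ ‖graphGrad β q‖
    · refine (measure_mono fun x hx => hx.2).trans (hC _ hq _ _ ⟨?_, ?_⟩)
      · exact Real.rpow_pos_of_pos (prodTimes_pos q) _
      · exact Real.rpow_le_one_of_one_le_of_nonpos (one_le_prodTimes q) (by linarith)
    · simp [slabs, hq]
  have hsum : ∑' q, volume (slabs q) ≠ ⊤ := by
    refine ne_top_of_le_ne_top ?_ (ENNReal.tsum_le_tsum hvolume)
    rw [ENNReal.tsum_mul_left]
    exact ENNReal.mul_ne_top ENNReal.ofReal_ne_top (tsum_prodTimes_rpow_ne_top _ hv)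
  filter_upwards [ae_finite_setOfPred_mem hsum] with x hfin hx
  refine hfin.subset ?_
  rintro q ⟨⟨p, hp⟩, hq⟩
  exact ⟨hq, hx, p, by rwa [sum_mul_graphPt, add_assoc] at hp⟩

theorem exists_prodTimes_nearNormal_rpow_neg_le {ρ : ℝ} (hρ : 0 ≤ ρ) :
    ∃ C, ∀ z : ℤ, z ≠ 0 → prodTimes (nearNormal β z) ^ (-ρ)
      ≤ C * |(z : ℝ)| ^ (-(hammingNorm (normalVec β) * ρ)) := by
  obtain ⟨γ, hγ, hprod⟩ := exists_pow_hammingNorm_le_prodTimes (normalVec β)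
  set s := hammingNorm (normalVec β)
  refine ⟨γ ^ (-(s * ρ)), fun z hz => ?_⟩
  have hz0 : 0 < |(z : ℝ)| := abs_pos.2 (Int.cast_ne_zero.2 hz)
  have hle : (γ * |(z : ℝ)|) ^ s ≤ prodTimes (nearNormal β z) :=
    hprod _ _ fun i => (abs_nearNormal_sub_mul_normalVec_le β z i).trans (by norm_num)
  calc prodTimes (nearNormal β z) ^ (-ρ)
      ≤ ((γ * |(z : ℝ)|) ^ s) ^ (-ρ) :=
        Real.rpow_le_rpow_of_nonpos (by positivity) hle (neg_nonpos.2 hρ)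
    _ = γ ^ (-(s * ρ)) * |(z : ℝ)| ^ (-(s * ρ)) := by
        rw [← Real.mul_rpow hγ.le hz0.le, ← Real.rpow_natCast, ← Real.rpow_mul (by positivity),
          mul_neg]

theorem ae_finite_abs_affineEval_latticeResidue_lt (ht : hammingNorm (normalVec β) ≤ t)
    (htv : t < hammingNorm (normalVec β) * (v / (m + 1 : ℕ))) (hfin : (simApprox β t).Finite)
    (hR : 0 < R) :
    ∀ᵐ x : Fin m → ℝ, x ∈ ball 0 R → {z : ℤ | z ≠ 0 ∧
      |affineEval (latticeResidue ((z : ℝ) • β)) x|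
        < prodTimes (nearNormal β z) ^ (-(v / (m + 1 : ℕ)))}.Finite := by
  obtain ⟨C, hC⟩ := exists_volume_ball_inter_abs_affineEval_lt_le (m := m) hR
  set s := hammingNorm (normalVec β)
  set ρ : ℝ := v / (m + 1 : ℕ)
  have hρ0 : 0 < ρ := pos_of_mul_pos_right ((Nat.cast_nonneg s).trans_lt (ht.trans_lt htv))
    (Nat.cast_nonneg s)
  obtain ⟨D, hD⟩ := exists_prodTimes_nearNormal_rpow_neg_le β hρ0.le
  let slab : ℤ → Set (Fin m → ℝ) := fun z => {x | z ≠ 0 ∧ x ∈ ball 0 R ∧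
    |affineEval (latticeResidue ((z : ℝ) • β)) x| < prodTimes (nearNormal β z) ^ (-ρ)}
  have hvolume : ∀ z, volume (slab z) ≤ ENNReal.ofReal (C * D *
      (|(z : ℝ)| ^ (-(s * ρ)) * ‖latticeResidue ((z : ℝ) • β)‖⁻¹)) := by
    intro z
    by_cases hz : z = 0
    · simp [slab, hz]
    have hsubset : slab z ⊆ ball 0 R ∩
        {x | |affineEval (latticeResidue ((z : ℝ) • β)) x| < D * |(z : ℝ)| ^ (-(s * ρ))} :=
      fun x hx => ⟨hx.2.1, hx.2.2.trans_le (hD z hz)⟩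
    refine (measure_mono hsubset).trans
      ((hC _ (latticeResidue_intCast_smul_ne_zero hfin hz) _).trans_eq ?_)
    congr 1
    ring
  have hsum : ∑' z, volume (slab z) ≠ ⊤ := by
    refine ne_top_of_le_ne_top ?_ (ENNReal.tsum_le_tsum hvolume)
    refine Summable.tsum_ofReal_ne_top (.mul_left _ ?_)
    refine summable_abs_rpow_neg_mul_inv_norm_latticeResidue (le_trans ?_ ht) htv hfin
    exact_mod_cast hammingNorm_le_hammingNorm_normalVec β
  filter_upwards [ae_finite_setOfPred_mem hsum] with x hx_fin hx
  exact hx_fin.subset fun z hz => ⟨hz.1, hx, hz.2⟩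

variable {β}

theorem exists_eq_nearNormal_of_mem_approxSet (hv : 1 ≤ v / (m + 1 : ℕ)) {x : Fin m → ℝ}
    {q : Fin (m + 1) → ℤ} (hq : q ∈ approxSet (graphPt β x) v) (hq4 : 4 ≤ prodTimes q)
    (hgrad : (m * ‖x‖ + 1) * ‖graphGrad β q‖ < 1 / 4) :
    ∃ z : ℤ, z ≠ 0 ∧ q = nearNormal β z ∧
      |affineEval (latticeResidue ((z : ℝ) • β)) x| < prodTimes q ^ (-(v / (m + 1 : ℕ))) := by
  obtain ⟨p, hp⟩ := hq
  have hflat : ‖graphGrad β q‖ < 1 / 2 := by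
    linarith [show 0 ≤ m * ‖x‖ * ‖graphGrad β q‖ by positivity]
  have hqz := eq_nearNormal_of_norm_graphGrad_lt hflat
  have hsmall : prodTimes q ^ (-(v / (m + 1 : ℕ))) ≤ 1 / 4 := by
    calc prodTimes q ^ (-(v / (m + 1 : ℕ))) ≤ prodTimes q ^ (-1 : ℝ) :=
          Real.rpow_le_rpow_of_exponent_le (one_le_prodTimes q) (neg_le_neg hv)
      _ = 1 / prodTimes q := by rw [Real.rpow_neg_one, one_div]
      _ ≤ 1 / 4 := one_div_le_one_div_of_le (by norm_num) hq4
  have hdot : |graphGrad β q ⬝ᵥ x| < 1 / 4 := by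
    have hle := abs_dotProduct_le (graphGrad β q) x
    rw [Fintype.card_fin] at hle
    linarith [norm_nonneg (graphGrad β q)]
  have hround : round (q (Fin.last m) * β (Fin.last m)) = -p := by
    refine round_eq_neg_of_abs_add_lt ?_
    rw [sum_mul_graphPt] at hp
    rw [abs_lt] at hp hdot ⊢
    constructor <;> linarith
  refine ⟨q (Fin.last m), fun h0 => ?_, hqz, ?_⟩
  · rw [h0, nearNormal_zero] at hqz
    norm_num [hqz, prodTimes] at hq4
  · rwa [← sum_nearNormal_mul_graphPt, ← hqz, hround, Int.cast_neg, sub_neg_eq_add]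

theorem ae_finite_approxSet_graphPt (ht : hammingNorm (normalVec β) ≤ t)
    (htv : t < hammingNorm (normalVec β) * (v / (m + 1 : ℕ))) (hfin : (simApprox β t).Finite) :
    ∀ᵐ x : Fin m → ℝ, (approxSet (graphPt β x) v).Finite := by
  have hv : 1 < v / (m + 1 : ℕ) :=
    lt_of_mul_lt_mul_left (by simpa using ht.trans_lt htv)
      (Nat.cast_nonneg (hammingNorm (normalVec β)))
  have hball : ∀ k : ℕ, ∀ᵐ x : Fin m → ℝ, x ∈ ball 0 (k + 1 : ℝ) →
      (approxSet (graphPt β x) v).Finite := by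
    intro k
    have hR : (0 : ℝ) < k + 1 := by positivity
    have hA : (0 : ℝ) < m * (k + 1) + 1 := by positivity
    filter_upwards
      [ae_finite_approxSet_graphPt_norm_graphGrad_ge β hv hR (κ := 1 / 4 / (m * (k + 1) + 1))
        (by positivity),
      ae_finite_abs_affineEval_latticeResidue_lt β ht htv hfin hR] with x hsteep hflat hx
    refine (((finite_setOf_prodTimes_lt _ 4).union (hsteep hx)).union
      ((hflat hx).image (nearNormal β))).subset fun q hq => ?_
    by_contra! hnot
    simp only [mem_union, not_or, mem_ofPred_eq, not_lt, not_and, not_le] at hnot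
    obtain ⟨⟨hq4, hgrad⟩, himage⟩ := hnot
    have hsmall : (m * ‖x‖ + 1) * ‖graphGrad β q‖ < 1 / 4 := by
      have hlt := hgrad hq
      rw [lt_div_iff₀' hA] at hlt
      refine lt_of_le_of_lt ?_ hlt
      gcongr
      exact (mem_ball_zero_iff.1 hx).le
    obtain ⟨z, hz, rfl, hzx⟩ := exists_eq_nearNormal_of_mem_approxSet hv.le hq hq4 hsmall
    exact himage ⟨z, ⟨hz, hzx⟩, rfl⟩
  filter_upwards [ae_all_iff.2 hball] with x hx
  obtain ⟨k, hk⟩ := exists_nat_gt ‖x‖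
  exact hx k (mem_ball_zero_iff.2 (hk.trans (lt_add_one _)))

end UpperBound

section Exponent

variable {m : ℕ} {β : Fin (m + 1) → ℝ} {v : ℝ}

theorem le_omegaT_graphPt_of_volume_ne_zero
    (hv : volume {x : Fin m → ℝ | (v : EReal) < omegaT (graphPt β x)} ≠ 0) (x : Fin m → ℝ) :
    (v : EReal) ≤ omegaT (graphPt β x) := by
  rcases le_or_gt v (m + 1 : ℕ) with hvm | hvm
  · exact (EReal.coe_le_coe_iff.2 hvm).trans
      (le_omegaT_of_approxSet_infinite (approxSet_natCast_infinite m.succ_ne_zero _))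
  have hm : (0 : ℝ) < (m + 1 : ℕ) := by positivity
  have hs : (0 : ℝ) < hammingNorm (normalVec β) := mod_cast hammingNorm_normalVec_pos β
  refine EReal.ge_of_forall_gt_iff_ge.1 fun w hw => ?_
  have hwv : max w (m + 1 : ℕ) < v := max_lt (EReal.coe_lt_coe_iff.1 hw) hvm
  obtain ⟨t, hwt, htv⟩ := exists_between
    (mul_lt_mul_of_pos_left (div_lt_div_of_pos_right hwv hm) hs)
  have ht : hammingNorm (normalVec β) ≤ t :=
    (le_mul_of_one_le_right hs.le ((one_le_div hm).2 (le_max_right _ _))).trans hwt.le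
  have hinf : (simApprox β t).Infinite := fun hfin => hv <|
    measure_mono_null (fun x hx => approxSet_infinite_of_lt_omegaT hx)
      (ae_finite_approxSet_graphPt ht htv hfin)
  exact (EReal.coe_le_coe_iff.2 (le_max_left _ _)).trans <| le_omegaT_of_approxSet_infinite <|
    approxSet_graphPt_infinite (hm.le.trans (le_max_right _ _)) hwt hinf x

theorem stmt11_general (β : Fin (m + 1) → ℝ) (μ : Measure (Fin m → ℝ)) [NeZero μ]
    (hμ : μ ≪ volume) :
    omegaTMeas (μ.map (graphPt β)) = ⨅ y ∈ range (graphPt β), omegaT y := by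
  have hmap := (measurableEmbedding_graphPt β).map_apply μ
  refine le_antisymm (sSup_le ?_) (EReal.ge_of_forall_gt_iff_ge.1 fun w hw => le_sSup ⟨w, rfl, ?_⟩)
  · rintro _ ⟨v, rfl, hpos⟩
    rw [hmap] at hpos
    refine le_iInf₂ ?_
    rintro _ ⟨x, rfl⟩
    exact le_omegaT_graphPt_of_volume_ne_zero (fun hnull => hpos.ne' (hμ hnull)) x
  · have huniv : graphPt β ⁻¹' {y | (w : EReal) < omegaT y} = univ :=
      eq_univ_of_forall fun x => hw.trans_le (iInf₂_le _ ⟨x, rfl⟩)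
    rw [hmap, huniv]
    exact Measure.measure_univ_pos.2 (NeZero.ne _)

theorem snoc_sum_castLE_eq_graphPt {r : ℕ} (hrm : r ≤ m) (a : Fin r → ℝ) (b : ℝ) :
    (fun x : Fin m → ℝ => (Fin.snoc x (∑ i, a i * x (Fin.castLE hrm i) + b) : Fin (m + 1) → ℝ))
      = graphPt (Fin.snoc (Function.extend (Fin.castLE hrm) a 0) b) := by
  funext x
  have hinj := Fin.castLE_injective hrm
  have hsum : ∑ i, a i * x (Fin.castLE hrm i)
      = ∑ j, Function.extend (Fin.castLE hrm) a 0 j * x j :=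
    Fintype.sum_of_injective _ hinj _ _
      (fun j hj => by rw [Function.extend_apply' _ _ _ hj, Pi.zero_apply, zero_mul])
      fun i => by rw [hinj.extend_apply]
  rw [hsum, graphPt, affineEval, Fin.init_snoc, Fin.snoc_last, dotProduct]

end Exponent

theorem stmt11 (m r : ℕ) (hm : 1 ≤ m) (hrm : r ≤ m) (a : Fin r → ℝ)
    (ha : ∀ i, a i ≠ 0) (b : ℝ) :
    omegaTMeas (Measure.map
        (fun x : Fin m → ℝ => Fin.snoc x (∑ i, a i * x (Fin.castLE hrm i) + b)) volume)
      = ⨅ y ∈ Set.range (fun x : Fin m → ℝ =>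
          Fin.snoc x (∑ i, a i * x (Fin.castLE hrm i) + b)), omegaT y := by
  rw [snoc_sum_castLE_eq_graphPt]
  exact stmt11_general _ volume .rfl
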